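/- arXiv:2411.15449 — 3 statements merged into one kernel-verified Lean document; each statement's English description precedes it below -/
import Mathlib

section
/- Let K be a double complex of R-modules and n ∈ ℤ. Assume: (i) K is n-diagonally bounded-below, i.e., there exists t ∈ ℤ such that K^{i,n−i} = 0 for all i < t; and (ii) for every j ∈ ℤ the j-th row K^{•,j} is exact at horizontal degree n−j, i.e., H^{n−j}(K^{•,j}) = 0. Then the total complex is exact at degree n: H^n(Tot(K)) = 0. -/
open CategoryTheory CategoryTheory.Limits

/-!
An element `x` of `Tot(K)^n` has only finitely many nonzero components, so it lies in some step
`F p` of the filtration by horizontal degree `< p`. If `x ∈ F (p + 1)` is a cycle and `a` is its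
component in horizontal degree `p`, then the component of `d x` in bidegree `(p + 1, n - p)` is
`h a` alone. Hence `h a = 0`, exactness of the row gives `a = h y`, and `x - d y` is a cycle in
`F p`. The boundedness hypothesis says that `F t = 0`, so this descent exhibits `x` as a boundary.
-/

lemma exact_of_exhaustive_filtration {A B C : Type*} [AddGroup A] [AddGroup B] [AddGroup C]
    {f : A →+ B} {g : B →+ C} (hgf : ∀ a, g (f a) = 0)
    {F : ℤ → Set B} (hmono : Monotone F) (hexh : ∀ x, ∃ p, x ∈ F p) {t : ℤ} (hbot : F t ⊆ {0})
    (hstep : ∀ p, ∀ x ∈ F (p + 1), g x = 0 → ∃ a, x - f a ∈ F p) :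
    Function.Exact f g := by
  have descent (p : ℤ) (hp : t ≤ p) : ∀ x ∈ F p, g x = 0 → x ∈ Set.range f := by
    induction p, hp using Int.leInduction with
    | base => exact fun x hx _ => ⟨0, by rw [hbot hx, map_zero]⟩
    | succ p _ ih =>
      intro x hx hgx
      obtain ⟨a, ha⟩ := hstep p x hx hgx
      obtain ⟨b, hb⟩ := ih (x - f a) ha (by rw [map_sub, hgx, hgf, sub_zero])
      exact ⟨b + a, by rw [map_add, hb, sub_add_cancel]⟩
  intro x
  refine ⟨fun hgx => ?_, ?_⟩
  · obtain ⟨p, hp⟩ := hexh x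
    exact descent (max t p) (le_max_left t p) x (hmono (le_max_right t p) hp) hgx
  · rintro ⟨a, rfl⟩
    exact hgf a

lemma exactAt_iff_function_exact {R : Type*} [Ring R] (L : CochainComplex (ModuleCat R) ℤ)
    (n : ℤ) : L.ExactAt n ↔ Function.Exact (L.d (n - 1) n) (L.d n (n + 1)) := by
  rw [L.exactAt_iff' (n - 1) n (n + 1) (by simp) (by simp)]
  exact ShortComplex.ShortExact.moduleCat_exact_iff_function_exact _

section TotalProj

variable {C I₁ I₂ I₁₂ : Type*} [Category* C] [Preadditive C] [DecidableEq I₁] [DecidableEq I₂]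
  [DecidableEq I₁₂] {c₁ : ComplexShape I₁} {c₂ : ComplexShape I₂}
  (K : HomologicalComplex₂ C c₁ c₂) (c₁₂ : ComplexShape I₁₂) [TotalComplexShape c₁ c₂ c₁₂]
  [K.HasTotal c₁₂]

/-- The projection of the total complex in degree `i₁₂` onto the summand of bidegree `(i₁, i₂)`.
It is zero when `(i₁, i₂)` does not have total degree `i₁₂`. -/
noncomputable def totalProj (i₁ : I₁) (i₂ : I₂) (i₁₂ : I₁₂) :
    (K.total c₁₂).X i₁₂ ⟶ (K.X i₁).X i₂ :=
  K.totalDesc fun j₁ j₂ _ =>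
    if h : j₁ = i₁ ∧ j₂ = i₂ then (K.XXIsoOfEq _ _ _ h.1 h.2).hom else 0

lemma ιTotal_totalProj_self {i₁ : I₁} {i₂ : I₂} {i₁₂ : I₁₂}
    (h : ComplexShape.π c₁ c₂ c₁₂ (i₁, i₂) = i₁₂) :
    K.ιTotal c₁₂ i₁ i₂ i₁₂ h ≫ totalProj K c₁₂ i₁ i₂ i₁₂ = 𝟙 _ := by
  simp [totalProj]

lemma ιTotal_totalProj_of_ne {i₁ j₁ : I₁} {i₂ j₂ : I₂} {i₁₂ : I₁₂}
    (h : ComplexShape.π c₁ c₂ c₁₂ (j₁, j₂) = i₁₂) (hne : (j₁, j₂) ≠ (i₁, i₂)) :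
    K.ιTotal c₁₂ j₁ j₂ i₁₂ h ≫ totalProj K c₁₂ i₁ i₂ i₁₂ = 0 := by
  rw [totalProj, K.ι_totalDesc, dif_neg (by simpa using hne)]

end TotalProj

section Differential

open ComplexShape (up)

variable {C : Type*} [Category* C] [Preadditive C]
  (K : HomologicalComplex₂ C (up ℤ) (up ℤ)) [K.HasTotal (up ℤ)]

lemma ιTotal_total_d (i j n : ℤ) (h : i + j = n) :
    K.ιTotal (up ℤ) i j n h ≫ (K.total (up ℤ)).d n (n + 1) =
      (K.d i (i + 1)).f j ≫ K.ιTotal (up ℤ) (i + 1) j (n + 1) (by simp; lia) +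
      i.negOnePow • (K.X i).d j (j + 1) ≫
        K.ιTotal (up ℤ) i (j + 1) (n + 1) (by simp; lia) := by
  rw [HomologicalComplex₂.total_d, Preadditive.comp_add, HomologicalComplex₂.ι_D₁,
    HomologicalComplex₂.ι_D₂, K.d₁_eq _ (i₁' := i + 1) (by simp) _ _ (by simp; lia),
    K.d₂_eq _ _ (i₂' := j + 1) (by simp) _ (by simp; lia)]
  simp

lemma total_d_totalProj {i i' j j' n n' : ℤ} (hi : i + 1 = i') (hj : j + 1 = j')
    (hn : n + 1 = n') :
    (K.total (up ℤ)).d n n' ≫ totalProj K (up ℤ) i' j' n' =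
      totalProj K (up ℤ) i j' n ≫ (K.d i i').f j' +
        i'.negOnePow • totalProj K (up ℤ) i' j n ≫ (K.X i').d j j' := by
  subst hi hj hn
  refine HomologicalComplex₂.total.hom_ext _ fun k l hkl => ?_
  rw [← Category.assoc, ιTotal_total_d, Preadditive.add_comp, Preadditive.comp_add,
    Linear.units_smul_comp, Linear.comp_units_smul]
  simp only [Category.assoc]
  congr 1
  · by_cases hkl' : (k, l) = (i, j + 1)
    · obtain ⟨rfl, rfl⟩ := Prod.mk.inj hkl'
      rw [ιTotal_totalProj_self, Category.comp_id, ← Category.assoc, ιTotal_totalProj_self,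
        Category.id_comp]
    · rw [ιTotal_totalProj_of_ne _ _ _ (by grind), comp_zero,
        ← Category.assoc, ιTotal_totalProj_of_ne _ _ _ hkl', zero_comp]
  · by_cases hkl' : (k, l) = (i + 1, j)
    · obtain ⟨rfl, rfl⟩ := Prod.mk.inj hkl'
      rw [ιTotal_totalProj_self, Category.comp_id, ← Category.assoc, ιTotal_totalProj_self,
        Category.id_comp]
    · rw [ιTotal_totalProj_of_ne _ _ _ (by grind), comp_zero, smul_zero,
        ← Category.assoc, ιTotal_totalProj_of_ne _ _ _ hkl', zero_comp, smul_zero]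

end Differential

section Module

open ComplexShape (up)

universe u w

variable {R : Type u} [Ring R]

section Components

variable {I₁ I₂ I₁₂ : Type*} [DecidableEq I₁₂] {c₁ : ComplexShape I₁} {c₂ : ComplexShape I₂}
  (K : HomologicalComplex₂ (ModuleCat.{w} R) c₁ c₂) {c₁₂ : ComplexShape I₁₂}
  [TotalComplexShape c₁ c₂ c₁₂] [K.HasTotal c₁₂]

lemma iSup_range_ιTotal (n : I₁₂) :
    ⨆ i : {i // ComplexShape.π c₁ c₂ c₁₂ i = n},
      LinearMap.range (K.ιTotal c₁₂ i.1.1 i.1.2 n i.2).hom = ⊤ := by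
  set S := ⨆ i : {i // ComplexShape.π c₁ c₂ c₁₂ i = n},
    LinearMap.range (K.ιTotal c₁₂ i.1.1 i.1.2 n i.2).hom
  have hmkQ : ModuleCat.ofHom S.mkQ = 0 := by
    refine HomologicalComplex₂.total.hom_ext _ fun i j h => ?_
    ext a
    have ha : (K.ιTotal c₁₂ i j n h).hom a ∈ S :=
      Submodule.mem_iSup_of_mem ⟨(i, j), h⟩ ⟨a, rfl⟩
    simpa using ha
  rw [← S.ker_mkQ, ← ModuleCat.hom_ofHom S.mkQ, hmkQ, ModuleCat.hom_zero, LinearMap.ker_zero]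

variable [DecidableEq I₁] [DecidableEq I₂]

lemma totalProj_ιTotal_self_apply {i₁ : I₁} {i₂ : I₂} {n : I₁₂}
    (h : ComplexShape.π c₁ c₂ c₁₂ (i₁, i₂) = n) (a : (K.X i₁).X i₂) :
    totalProj K c₁₂ i₁ i₂ n (K.ιTotal c₁₂ i₁ i₂ n h a) = a :=
  congr($(ιTotal_totalProj_self K c₁₂ h).hom a)

lemma totalProj_ιTotal_of_ne_apply {i₁ j₁ : I₁} {i₂ j₂ : I₂} {n : I₁₂}
    (h : ComplexShape.π c₁ c₂ c₁₂ (j₁, j₂) = n) (hne : (j₁, j₂) ≠ (i₁, i₂))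
    (a : (K.X j₁).X j₂) :
    totalProj K c₁₂ i₁ i₂ n (K.ιTotal c₁₂ j₁ j₂ n h a) = 0 :=
  congr($(ιTotal_totalProj_of_ne K c₁₂ h hne).hom a)

lemma exists_eq_sum_ιTotal_totalProj {n : I₁₂} (x : (K.total c₁₂).X n) :
    ∃ s : Finset {i // ComplexShape.π c₁ c₂ c₁₂ i = n},
      x = ∑ i ∈ s, K.ιTotal c₁₂ i.1.1 i.1.2 n i.2 (totalProj K c₁₂ i.1.1 i.1.2 n x) := by
  have hxtop : x ∈ ⨆ i : {i // ComplexShape.π c₁ c₂ c₁₂ i = n},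
      LinearMap.range (K.ιTotal c₁₂ i.1.1 i.1.2 n i.2).hom :=
    (iSup_range_ιTotal K (c₁₂ := c₁₂) n).ge Submodule.mem_top
  obtain ⟨f, hf, hfx⟩ := (Submodule.mem_iSup_iff_exists_finsupp _ x).1 hxtop
  choose a ha using hf
  have hx : x = ∑ i ∈ f.support, K.ιTotal c₁₂ i.1.1 i.1.2 n i.2 (a i) :=
    hfx.symm.trans (Finset.sum_congr rfl fun i _ => (ha i).symm)
  have hproj (i) (hi : i ∈ f.support) : totalProj K c₁₂ i.1.1 i.1.2 n x = a i := by
    rw [hx, map_sum, Finset.sum_eq_single_of_mem i hi, totalProj_ιTotal_self_apply]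
    exact fun j _ hji => totalProj_ιTotal_of_ne_apply K _ (Subtype.coe_ne_coe.2 hji) _
  exact ⟨f.support, hx.trans (Finset.sum_congr rfl fun i hi => by rw [hproj i hi])⟩

end Components

variable {K : HomologicalComplex₂ (ModuleCat.{w} R) (up ℤ) (up ℤ)}

lemma totalProj_d_apply {i i' j j' n n' : ℤ} (hi : i + 1 = i') (hj : j + 1 = j')
    (hn : n + 1 = n') (x : (K.total (up ℤ)).X n) :
    totalProj K (up ℤ) i' j' n' ((K.total (up ℤ)).d n n' x) =
      (K.d i i').f j' (totalProj K (up ℤ) i j' n x) +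
        i'.negOnePow • (K.X i').d j j' (totalProj K (up ℤ) i' j n x) :=
  congr($(total_d_totalProj K hi hj hn).hom x)

/-- The submodule of `Tot(K)^n` of elements whose components in horizontal degrees `≥ p` vanish.
For fixed `n` these form an increasing filtration indexed by `p`. -/
noncomputable def horizontalFiltration
    (K : HomologicalComplex₂ (ModuleCat.{w} R) (up ℤ) (up ℤ)) (n p : ℤ) :
    Submodule R ((K.total (up ℤ)).X n) :=
  ⨅ i ≥ p, LinearMap.ker (totalProj K (up ℤ) i (n - i) n).hom

variable {n : ℤ}

lemma mem_horizontalFiltration {p : ℤ} {x : (K.total (up ℤ)).X n} :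
    x ∈ horizontalFiltration K n p ↔ ∀ i ≥ p, totalProj K (up ℤ) i (n - i) n x = 0 := by
  simp [horizontalFiltration, Submodule.mem_iInf]

lemma horizontalFiltration_mono : Monotone (horizontalFiltration K n) := fun _ _ h =>
  iInf_mono fun _ => iInf_mono' fun hi => ⟨h.trans hi, le_rfl⟩

lemma exists_mem_horizontalFiltration (x : (K.total (up ℤ)).X n) :
    ∃ p, x ∈ horizontalFiltration K n p := by
  obtain ⟨s, hs⟩ := exists_eq_sum_ιTotal_totalProj K x
  obtain ⟨m, hm⟩ := (s.image fun k => k.1.1).bddAbove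
  refine ⟨m + 1, mem_horizontalFiltration.2 fun i hi => ?_⟩
  rw [hs, map_sum]
  refine Finset.sum_eq_zero fun k hk => totalProj_ιTotal_of_ne_apply K _ (fun hki => ?_) _
  have hkm : k.1.1 ≤ m := hm (Finset.mem_image_of_mem _ hk)
  grind

lemma horizontalFiltration_eq_bot {t : ℤ} (hbdd : ∀ i < t, IsZero ((K.X i).X (n - i))) :
    horizontalFiltration K n t = ⊥ := by
  refine (Submodule.eq_bot_iff _).2 fun x hx => ?_
  obtain ⟨s, hs⟩ := exists_eq_sum_ιTotal_totalProj K x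
  rw [hs]
  refine Finset.sum_eq_zero fun ⟨⟨i, j⟩, hij⟩ _ => ?_
  obtain rfl : j = n - i := eq_sub_of_add_eq' hij
  suffices totalProj K (up ℤ) i (n - i) n x = 0 by rw [this, map_zero]
  rcases lt_or_ge i t with hi | hi
  · have := ModuleCat.subsingleton_of_isZero (hbdd i hi)
    exact Subsingleton.elim _ _
  · exact mem_horizontalFiltration.1 hx i hi

lemma exists_sub_d_mem_horizontalFiltration {p : ℤ} (hrow : (K.flip.X (n - p)).ExactAt p)
    {x : (K.total (up ℤ)).X n} (hx : x ∈ horizontalFiltration K n (p + 1))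
    (hdx : (K.total (up ℤ)).d n (n + 1) x = 0) :
    ∃ y, x - (K.total (up ℤ)).d (n - 1) n y ∈ horizontalFiltration K n p := by
  rw [mem_horizontalFiltration] at hx
  have htop : (K.d p (p + 1)).f (n - p) (totalProj K (up ℤ) p (n - p) n x) = 0 := by
    have hcomp := totalProj_d_apply (i := p) (j := n - (p + 1)) (j' := n - p) rfl (by lia) rfl x
    rwa [hdx, map_zero, hx (p + 1) le_rfl, map_zero, smul_zero, add_zero, eq_comm] at hcomp
  obtain ⟨y, hy⟩ : ∃ y : (K.X (p - 1)).X (n - p),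
      (K.d (p - 1) p).f (n - p) y = totalProj K (up ℤ) p (n - p) n x :=
    ((exactAt_iff_function_exact _ _).1 hrow _).1 htop
  refine ⟨K.ιTotal (up ℤ) (p - 1) (n - p) (n - 1) (by simp) y,
    mem_horizontalFiltration.2 fun i hi => ?_⟩
  rw [map_sub, totalProj_d_apply (sub_add_cancel i 1) (sub_add_cancel (n - i) 1)
    (sub_add_cancel n 1), totalProj_ιTotal_of_ne_apply (i₁ := i) K _ (by grind), map_zero,
    smul_zero, add_zero]
  obtain rfl | hpi := eq_or_lt_of_le hi
  · rw [totalProj_ιTotal_self_apply, hy, sub_self]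
  · rw [hx i hpi, totalProj_ιTotal_of_ne_apply K _ (by grind), map_zero, sub_zero]

theorem total_exactAt_of_rows_exact_general
    (K : HomologicalComplex₂ (ModuleCat.{w} R) (up ℤ) (up ℤ)) (n : ℤ)
    (hbdd : ∃ t : ℤ, ∀ i : ℤ, i < t → IsZero ((K.X i).X (n - i)))
    (hrows : ∀ j : ℤ, (K.flip.X j).ExactAt (n - j)) :
    (K.total (up ℤ)).ExactAt n := by
  obtain ⟨t, hbdd⟩ := hbdd
  rw [exactAt_iff_function_exact]
  have hrow (p : ℤ) : (K.flip.X (n - p)).ExactAt p := by simpa using hrows (n - p)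
  exact exact_of_exhaustive_filtration
    (f := ((K.total (up ℤ)).d (n - 1) n).hom.toAddMonoidHom)
    (g := ((K.total (up ℤ)).d n (n + 1)).hom.toAddMonoidHom)
    (fun y => congr($((K.total (up ℤ)).d_comp_d (n - 1) n (n + 1)).hom y))
    (F := fun p => horizontalFiltration K n p) (fun _ _ h => horizontalFiltration_mono h)
    exists_mem_horizontalFiltration (horizontalFiltration_eq_bot hbdd).le
    fun p _ hx hdx => exists_sub_d_mem_horizontalFiltration (hrow p) hx hdx

end Module

/-- **Proposition 4.1(1) (local acyclic assembly lemma, row version).**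
Let `K` be a double complex of `R`-modules and `n : ℤ`.  If `K` is `n`-diagonally
bounded-below (there is `t` with `K^{i,n−i} = 0` for all `i < t`) and every row
`K^{•,j}` is exact at horizontal degree `n − j`, then the total complex of `K` is
exact at degree `n`. -/
theorem total_exactAt_of_rows_exact
    (R : Type) [Ring R]
    (K : HomologicalComplex₂ (ModuleCat R) (ComplexShape.up ℤ) (ComplexShape.up ℤ))
    (n : ℤ)
    (hbdd : ∃ t : ℤ, ∀ i : ℤ, i < t → IsZero ((K.X i).X (n - i)))
    (hrows : ∀ j : ℤ, (K.flip.X j).ExactAt (n - j)) :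
    (K.total (ComplexShape.up ℤ)).ExactAt n :=
  total_exactAt_of_rows_exact_general K n hbdd hrows
end

section
/- Let K be a double complex of R-modules and n ∈ ℤ. Assume: (i) K is n-diagonally bounded-above, i.e., there exists t ∈ ℤ such that K^{i,n−i} = 0 for all i > t; and (ii) for every i ∈ ℤ the i-th column K^{i,•} is exact at vertical degree n−i, i.e., H^{n−i}(K^{i,•}) = 0. Then the total complex is exact at degree n: H^n(Tot(K)) = 0. -/
open CategoryTheory CategoryTheory.Limits

/-!
Filter `Tot(K)^n` by the submodules `F a` of elements whose components in the columns `< a` vanish.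
The total differential never lowers the column index, so for a cocycle `x ∈ F a` the component of
`d x` in column `a` is `± v y`, where `v` is the vertical differential and `y` is the component of
`x` in that column. Hence `v y = 0`, and exactness of the column gives `y = v w`; subtracting
`± d (ι w)` from `x`, where `ι` is the inclusion of the summand of `w`, yields a cohomologous
cocycle in `F (a + 1)`. Elements of a direct sum have finite support, so every `x` lies in some
`F a`, and if the diagonal vanishes beyond column `t` then `F (t + 1) = 0`: after finitely many
steps nothing is left of `x`.
-/

universe v u

namespace AcyclicAssembly

open ComplexShape (up)

lemma inf_le_of_inf_le_sup_succ {α : Type*} [Lattice α] [IsModularLattice α] {B Z : α}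
    (hBZ : B ≤ Z) {F : ℤ → α} (hF : ∀ a, Z ⊓ F a ≤ B ⊔ F (a + 1)) {a b : ℤ} (hab : a ≤ b)
    (hb : F b ≤ B) : Z ⊓ F a ≤ B := by
  induction a, hab using Int.leInductionDown with
  | base => exact inf_le_right.trans hb
  | pred a _ ih =>
    have hstep := hF (a - 1)
    rw [sub_add_cancel] at hstep
    calc Z ⊓ F (a - 1) ≤ (B ⊔ F a) ⊓ Z := le_inf hstep inf_le_left
      _ = B ⊔ F a ⊓ Z := sup_inf_assoc_of_le _ hBZ
      _ ≤ B := sup_le le_rfl (inf_comm Z (F a) ▸ ih)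

section Preadditive

variable {C : Type*} [Category* C] [Preadditive C] (K : HomologicalComplex₂ C (up ℤ) (up ℤ))
  [K.HasTotal (up ℤ)]

lemma ιTotal_comp_total_d {p p' q q' n m : ℤ} (h : p + q = n) (hp : p + 1 = p') (hq : q + 1 = q')
    (hm : n + 1 = m) :
    K.ιTotal (up ℤ) p q n h ≫ (K.total (up ℤ)).d n m =
      (K.d p p').f q ≫ K.ιTotal (up ℤ) p' q m (show p' + q = m by lia) +
        p.negOnePow • (K.X p).d q q' ≫ K.ιTotal (up ℤ) p q' m (show p + q' = m by lia) := by
  rw [HomologicalComplex₂.total_d, Preadditive.comp_add, HomologicalComplex₂.ι_D₁,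
    HomologicalComplex₂.ι_D₂, K.d₁_eq (up ℤ) hp q m (show p' + q = m by lia),
    K.d₂_eq (up ℤ) p hq m (show p + q' = m by lia)]
  congr 1
  exact one_smul _ _

/-- The projection of `Tot(K)^n` onto its summand `K^{p,q}`, where `p + q = n`. Summands are told
apart by their column index alone, since it determines the row index. -/
noncomputable def πTotal (p q n : ℤ) (h : p + q = n) :
    (K.total (up ℤ)).X n ⟶ (K.X p).X q :=
  K.totalDesc fun p' q' (h' : p' + q' = n) =>
    if hp : p' = p then (K.XXIsoOfEq _ _ _ hp (show q' = q by lia)).hom else 0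

@[simp]
lemma ιTotal_comp_πTotal_self {p q n : ℤ} (h : p + q = n) :
    K.ιTotal (up ℤ) p q n h ≫ πTotal K p q n h = 𝟙 _ := by
  simp [πTotal]

lemma ιTotal_comp_πTotal_of_ne {p q p' q' n : ℤ} (h : p + q = n) (h' : p' + q' = n)
    (hne : p ≠ p') : K.ιTotal (up ℤ) p q n h ≫ πTotal K p' q' n h' = 0 := by
  simp [πTotal, hne]

lemma total_d_comp_πTotal {p p' q q' n m : ℤ} (h : p + q' = n) (hp : p + 1 = p') (hq : q + 1 = q')
    (hm : n + 1 = m) :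
    (K.total (up ℤ)).d n m ≫ πTotal K p' q' m (by lia) =
      πTotal K p q' n h ≫ (K.d p p').f q' +
        p'.negOnePow • πTotal K p' q n (by lia) ≫ (K.X p').d q q' := by
  apply HomologicalComplex₂.total.hom_ext
  intro i j (hij : i + j = n)
  rw [← Category.assoc, ιTotal_comp_total_d K hij rfl rfl hm]
  simp only [Preadditive.add_comp, Preadditive.comp_add, Linear.units_smul_comp,
    Linear.comp_units_smul, Category.assoc]
  obtain rfl | hi := eq_or_ne i p
  · obtain rfl : j = q' := by lia
    subst hp
    simp [ιTotal_comp_πTotal_of_ne, reassoc_of% ιTotal_comp_πTotal_of_ne,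
      reassoc_of% ιTotal_comp_πTotal_self]
  · obtain rfl | hi' := eq_or_ne i p'
    · obtain rfl : j = q := by lia
      subst hq
      simp [ιTotal_comp_πTotal_of_ne, reassoc_of% ιTotal_comp_πTotal_of_ne, hi,
        reassoc_of% ιTotal_comp_πTotal_self]
    · have hi_succ : i + 1 ≠ p' := by lia
      simp [ιTotal_comp_πTotal_of_ne, reassoc_of% ιTotal_comp_πTotal_of_ne, hi, hi', hi_succ]

end Preadditive

section CochainComplex

variable {R : Type u} [Ring R] (L : CochainComplex (ModuleCat.{v} R) ℤ) {i j k : ℤ}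

lemma range_d_le_ker_d : LinearMap.range (L.d i j).hom ≤ LinearMap.ker (L.d j k).hom := by
  rw [LinearMap.range_le_ker_iff, ← ModuleCat.hom_comp, L.d_comp_d, ModuleCat.hom_zero]

lemma exactAt_iff_ker_d_le_range_d (hij : i + 1 = j) (hjk : j + 1 = k) :
    L.ExactAt j ↔ LinearMap.ker (L.d j k).hom ≤ LinearMap.range (L.d i j).hom := by
  rw [L.exactAt_iff' i j k ((up ℤ).prev_eq' hij) ((up ℤ).next_eq' hjk)]
  exact ShortComplex.moduleCat_exact_iff_ker_sub_range _

end CochainComplex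

section ModuleCat

variable {R : Type u} [Ring R] (K : HomologicalComplex₂ (ModuleCat.{v} R) (up ℤ) (up ℤ))

/-- The submodule of `Tot(K)^n` of the elements whose components in the columns `< a` vanish. -/
noncomputable def colFiltration (n a : ℤ) : Submodule R ((K.total (up ℤ)).X n) :=
  ⨅ (p : ℤ) (q : ℤ) (h : p + q = n) (_ : p < a), LinearMap.ker (πTotal K p q n h).hom

lemma mem_colFiltration {n a : ℤ} {x : (K.total (up ℤ)).X n} :
    x ∈ colFiltration K n a ↔ ∀ p q (h : p + q = n), p < a → πTotal K p q n h x = 0 := by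
  simp only [colFiltration, Submodule.mem_iInf, LinearMap.mem_ker]

lemma colFiltration_antitone (n : ℤ) : Antitone (colFiltration K n) := fun _ _ hab _ hx =>
  (mem_colFiltration K).2 fun p q h hp => (mem_colFiltration K).1 hx p q h (hp.trans_le hab)

lemma iSup_range_ιTotal (n : ℤ) :
    ⨆ p : ℤ, LinearMap.range (K.ιTotal (up ℤ) p (n - p) n (add_sub_cancel p n)).hom = ⊤ := by
  set N := ⨆ p : ℤ, LinearMap.range (K.ιTotal (up ℤ) p (n - p) n (add_sub_cancel p n)).hom
  have hmkQ : ModuleCat.ofHom N.mkQ = 0 := by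
    apply HomologicalComplex₂.total.hom_ext
    intro p q (h : p + q = n)
    obtain rfl : q = n - p := by lia
    ext y
    exact (Submodule.Quotient.mk_eq_zero N).2 (Submodule.mem_iSup_of_mem p ⟨y, rfl⟩)
  rw [← N.ker_mkQ, ← ModuleCat.hom_ofHom N.mkQ, hmkQ, ModuleCat.hom_zero, LinearMap.ker_zero]

lemma πTotal_ιTotal_self {p q n : ℤ} (h : p + q = n) (y : (K.X p).X q) :
    πTotal K p q n h (K.ιTotal (up ℤ) p q n h y) = y :=
  ConcreteCategory.congr_hom (ιTotal_comp_πTotal_self K h) y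

lemma πTotal_ιTotal_of_ne {p q p' q' n : ℤ} (h : p + q = n) (h' : p' + q' = n) (hne : p ≠ p')
    (y : (K.X p).X q) : πTotal K p' q' n h' (K.ιTotal (up ℤ) p q n h y) = 0 :=
  ConcreteCategory.congr_hom (ιTotal_comp_πTotal_of_ne K h h' hne) y

lemma πTotal_total_d {p p' q q' n m : ℤ} (h : p + q' = n) (hp : p + 1 = p') (hq : q + 1 = q')
    (hm : n + 1 = m) (x : (K.total (up ℤ)).X n) :
    πTotal K p' q' m (by lia) ((K.total (up ℤ)).d n m x) =
      (K.d p p').f q' (πTotal K p q' n h x) +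
        p'.negOnePow • (K.X p').d q q' (πTotal K p' q n (by lia) x) :=
  ConcreteCategory.congr_hom (total_d_comp_πTotal K h hp hq hm) x

lemma exists_eq_sum_ιTotal_πTotal {n : ℤ} (x : (K.total (up ℤ)).X n) :
    ∃ s : Finset ℤ, x = ∑ p ∈ s, K.ιTotal (up ℤ) p (n - p) n (add_sub_cancel p n)
      (πTotal K p (n - p) n (add_sub_cancel p n) x) := by
  obtain ⟨f, hf, hfx⟩ := (Submodule.mem_iSup_iff_exists_finsupp _ x).1
    (iSup_range_ιTotal K n ▸ Submodule.mem_top)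
  choose y hy using hf
  have hπ : ∀ p ∈ f.support, πTotal K p (n - p) n (add_sub_cancel p n) x = y p := by
    intro p hp
    rw [← hfx, Finsupp.sum, map_sum, Finset.sum_eq_single_of_mem p hp, ← hy p]
    · exact πTotal_ιTotal_self K _ _
    · intro i _ hi
      rw [← hy i]
      exact πTotal_ιTotal_of_ne K _ _ hi _
  refine ⟨f.support, hfx.symm.trans (Finset.sum_congr rfl fun p hp => ?_)⟩
  rw [hπ p hp]
  exact (hy p).symm

lemma exists_mem_colFiltration {n : ℤ} (x : (K.total (up ℤ)).X n) :
    ∃ a, x ∈ colFiltration K n a := by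
  obtain ⟨s, hs⟩ := exists_eq_sum_ιTotal_πTotal K x
  obtain ⟨a, ha⟩ := s.bddBelow
  refine ⟨a, (mem_colFiltration K).2 fun p q h hp => ?_⟩
  rw [hs, map_sum]
  exact Finset.sum_eq_zero fun i hi => πTotal_ιTotal_of_ne K _ h (hp.trans_le (ha hi)).ne' _

lemma colFiltration_eq_bot {n a : ℤ} (ha : ∀ p, a ≤ p → IsZero ((K.X p).X (n - p))) :
    colFiltration K n a = ⊥ := by
  refine (Submodule.eq_bot_iff _).2 fun x hx => ?_
  obtain ⟨s, hs⟩ := exists_eq_sum_ιTotal_πTotal K x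
  rw [hs]
  refine Finset.sum_eq_zero fun p _ => ?_
  have hπ : πTotal K p (n - p) n (add_sub_cancel p n) x = 0 := by
    obtain hp | hp := lt_or_ge p a
    · exact (mem_colFiltration K).1 hx p _ _ hp
    · have := ModuleCat.subsingleton_of_isZero (ha p hp)
      exact Subsingleton.elim _ _
  rw [hπ, map_zero]

lemma mem_colFiltration_succ {n a b : ℤ} (h : a + b = n) {x : (K.total (up ℤ)).X n}
    (hx : x ∈ colFiltration K n a) (hπ : πTotal K a b n h x = 0) :
    x ∈ colFiltration K n (a + 1) := by
  refine (mem_colFiltration K).2 fun p q hpq hp => ?_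
  obtain hpa | rfl := (Int.lt_add_one_iff.1 hp).lt_or_eq
  · exact (mem_colFiltration K).1 hx p q hpq hpa
  · obtain rfl : b = q := by lia
    exact hπ

lemma ιTotal_mem_colFiltration {n a b : ℤ} (h : a + b = n) (y : (K.X a).X b) :
    K.ιTotal (up ℤ) a b n h y ∈ colFiltration K n a :=
  (mem_colFiltration K).2 fun _ _ h' hp => πTotal_ιTotal_of_ne K h h' hp.ne' y

lemma total_d_mem_colFiltration {n m a : ℤ} (hm : n + 1 = m) {x : (K.total (up ℤ)).X n}
    (hx : x ∈ colFiltration K n a) : (K.total (up ℤ)).d n m x ∈ colFiltration K m a := by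
  refine (mem_colFiltration K).2 fun p q h hp => ?_
  rw [mem_colFiltration] at hx
  rw [πTotal_total_d K (p := p - 1) (q := q - 1) (by lia) (by lia) (by lia) hm,
    hx (p - 1) q _ (by lia), hx p (q - 1) _ hp, map_zero, map_zero, smul_zero, add_zero]

lemma πTotal_total_d_of_mem_colFiltration {n m a b b' : ℤ} (h : a + b = n) (hb : b + 1 = b')
    (hm : n + 1 = m) {x : (K.total (up ℤ)).X n} (hx : x ∈ colFiltration K n a) :
    πTotal K a b' m (by lia) ((K.total (up ℤ)).d n m x) =
      a.negOnePow • (K.X a).d b b' (πTotal K a b n h x) := by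
  rw [πTotal_total_d K (p := a - 1) (by lia) (by lia) hb hm,
    (mem_colFiltration K).1 hx (a - 1) b' _ (by lia), map_zero, zero_add]

lemma ker_total_d_inf_colFiltration_le {l n m a : ℤ} (hl : l + 1 = n) (hm : n + 1 = m)
    (hcol : (K.X a).ExactAt (n - a)) :
    LinearMap.ker ((K.total (up ℤ)).d n m).hom ⊓ colFiltration K n a ≤
      LinearMap.range ((K.total (up ℤ)).d l n).hom ⊔ colFiltration K n (a + 1) := by
  rintro x ⟨hdx : (K.total (up ℤ)).d n m x = 0, hx⟩
  have hl' : l - a + 1 = n - a := by lia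
  have hm' : n - a + 1 = m - a := by lia
  set y := πTotal K a (n - a) n (add_sub_cancel a n) x
  have hdy : (K.X a).d (n - a) (m - a) y = 0 := by
    have hπ := πTotal_total_d_of_mem_colFiltration K (add_sub_cancel a n) hm' hm hx
    rw [hdx, map_zero] at hπ
    exact (smul_eq_zero_iff_eq _).1 hπ.symm
  obtain ⟨w, hw : (K.X a).d (l - a) (n - a) w = y⟩ :=
    (exactAt_iff_ker_d_le_range_d (K.X a) hl' hm').1 hcol hdy
  set u := K.ιTotal (up ℤ) a (l - a) l (add_sub_cancel a l) (a.negOnePow • w) with hu_def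
  have hu : u ∈ colFiltration K l a := ιTotal_mem_colFiltration K _ _
  have hπu : πTotal K a (n - a) n (add_sub_cancel a n) ((K.total (up ℤ)).d l n u) = y := by
    rw [πTotal_total_d_of_mem_colFiltration K (add_sub_cancel a l) hl' hl hu, hu_def,
      πTotal_ιTotal_self, Units.smul_def _ w, map_zsmul, hw, ← Units.smul_def, smul_smul,
      Int.units_mul_self, one_smul]
  have hsub : x - (K.total (up ℤ)).d l n u ∈ colFiltration K n (a + 1) :=
    mem_colFiltration_succ K (add_sub_cancel a n)
      (sub_mem hx (total_d_mem_colFiltration K hl hu)) (by rw [map_sub, hπu, sub_self])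
  exact Submodule.mem_sup.2 ⟨_, ⟨u, rfl⟩, _, hsub, add_sub_cancel _ _⟩

end ModuleCat

end AcyclicAssembly

open ComplexShape (up) in
open AcyclicAssembly in
theorem total_exactAt_of_columns_exact_general {R : Type u} [Ring R]
    (K : HomologicalComplex₂ (ModuleCat.{v} R) (up ℤ) (up ℤ)) (n : ℤ)
    (hbdd : ∃ t : ℤ, ∀ i : ℤ, t < i → IsZero ((K.X i).X (n - i)))
    (hcols : ∀ i : ℤ, (K.X i).ExactAt (n - i)) :
    (K.total (up ℤ)).ExactAt n := by
  obtain ⟨t, ht⟩ := hbdd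
  have hbot : colFiltration K n (t + 1) = ⊥ := colFiltration_eq_bot K ht
  have hstep (i : ℤ) :=
    ker_total_d_inf_colFiltration_le K (sub_add_cancel n 1) rfl (hcols i)
  rw [exactAt_iff_ker_d_le_range_d _ (sub_add_cancel n 1) rfl]
  intro x hdx
  obtain ⟨a, ha⟩ := exists_mem_colFiltration K x
  have hx : x ∈ colFiltration K n (min a (t + 1)) :=
    colFiltration_antitone K n (min_le_left a (t + 1)) ha
  exact inf_le_of_inf_le_sup_succ (F := colFiltration K n) (range_d_le_ker_d (K.total (up ℤ)))
    hstep (min_le_right a (t + 1)) (hbot.trans_le bot_le) ⟨hdx, hx⟩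

/-- **Proposition 4.1(2) (local acyclic assembly lemma, column version).**
Let `K` be a double complex of `R`-modules and `n : ℤ`.  If `K` is `n`-diagonally
bounded-above (there is `t` with `K^{i,n−i} = 0` for all `i > t`) and every column
`K^{i,•}` is exact at vertical degree `n − i`, then the total complex of `K` is
exact at degree `n`. -/
theorem total_exactAt_of_columns_exact
    (R : Type) [Ring R]
    (K : HomologicalComplex₂ (ModuleCat R) (ComplexShape.up ℤ) (ComplexShape.up ℤ))
    (n : ℤ)
    (hbdd : ∃ t : ℤ, ∀ i : ℤ, t < i → IsZero ((K.X i).X (n - i)))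
    (hcols : ∀ i : ℤ, (K.X i).ExactAt (n - i)) :
    (K.total (ComplexShape.up ℤ)).ExactAt n :=
  total_exactAt_of_columns_exact_general K n hbdd hcols
end

section
/- Let f : K → L be a morphism of double complexes of R-modules such that for every i ∈ ℤ the i-th column morphism f^{i,•} : K^{i,•} → L^{i,•} is a quasi-isomorphism of cochain complexes. If K and L are diagonally bounded-above (i.e., for every n ∈ ℤ there exists t ∈ ℤ such that K^{i,n−i} = 0 and L^{i,n−i} = 0 for all i > t), then the total morphism Tot(f) : Tot(K) → Tot(L) is a quasi-isomorphism. -/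
open CategoryTheory CategoryTheory.Limits

/-!
A morphism of cochain complexes is a quasi-isomorphism if and only if its mapping cone is acyclic.
Filter `Cone(Tot f)` by columns: its `p`-th graded piece is, up to signs, the cone of `f^{p,•}`,
which is acyclic. Hence a cocycle of filtration degree `p` can be moved, by subtracting a
coboundary, to filtration degree `p + 1`. Every element of a direct sum lies in some step of the
filtration, and in a given degree `Tot f` is bijective on the steps far enough to the right, where
all components of `f` are isomorphisms. So finitely many corrections bring a cocycle to a
place where it is visibly a coboundary.
-/

universe u v

namespace DoubleComplex

open HomologicalComplex₂

variable {R : Type u} [Ring R]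

section Homology

variable {ι : Type*} {c : ComplexShape ι} {M N : HomologicalComplex (ModuleCat.{v} R) c}

lemma homologyπ_surjective (i : ι) : Function.Surjective (M.homologyπ i) :=
  (ModuleCat.epi_iff_surjective _).1 inferInstance

lemma exists_iCycles_eq {i j : ι} (hij : c.next i = j) {x : M.X i} (hx : M.d i j x = 0) :
    ∃ z : M.cycles i, M.iCycles i z = x :=
  (ShortComplex.moduleCat_exact_iff _).1
    (ShortComplex.exact_of_f_is_kernel (.mk _ _ (M.iCycles_d i j)) (M.cyclesIsKernel i j hij)) x hx

lemma d_d_apply {i j k : ι} (x : M.X i) : M.d j k (M.d i j x) = 0 := by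
  rw [elementwise_of% M.d_comp_d i j k]; rfl

lemma d_iCycles_apply {i j : ι} (z : M.cycles i) : M.d i j (M.iCycles i z) = 0 := by
  simp [← ConcreteCategory.comp_apply]

lemma homologyπ_apply_eq_zero_iff {i j : ι} (hij : c.prev j = i) (z : M.cycles j) :
    M.homologyπ j z = 0 ↔ ∃ y, M.d i j y = M.iCycles j z := by
  have iCycles_toCycles (y : M.X i) : M.iCycles j (M.toCycles i j y) = M.d i j y := by
    rw [← ConcreteCategory.comp_apply, M.toCycles_i]
  have hπ : LinearMap.range (M.toCycles i j).hom = LinearMap.ker (M.homologyπ j).hom :=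
    (ShortComplex.exact_of_g_is_cokernel (.mk _ _ (M.toCycles_comp_homologyπ i j))
      (M.homologyIsCokernel i j hij)).moduleCat_range_eq_ker
  have hι : Function.Injective (M.iCycles j) := (ModuleCat.mono_iff_injective _).1 inferInstance
  change z ∈ LinearMap.ker (M.homologyπ j).hom ↔ _
  rw [← hπ]
  constructor
  · rintro ⟨y, rfl⟩
    exact ⟨y, (iCycles_toCycles y).symm⟩
  · rintro ⟨y, hy⟩
    exact ⟨y, hι ((iCycles_toCycles y).trans hy)⟩

lemma homologyMap_injective_iff {φ : M ⟶ N} {i j k : ι} (hi : c.prev j = i) (hk : c.next j = k) :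
    Function.Injective (HomologicalComplex.homologyMap φ j) ↔
      ∀ x : M.X j, M.d j k x = 0 → (∃ y, N.d i j y = φ.f j x) → ∃ x', M.d i j x' = x := by
  have h (z : M.cycles j) : HomologicalComplex.homologyMap φ j (M.homologyπ j z) = 0 ↔
      ∃ y, N.d i j y = φ.f j (M.iCycles j z) := by
    rw [elementwise_of% HomologicalComplex.homologyπ_naturality φ j,
      homologyπ_apply_eq_zero_iff hi, elementwise_of% HomologicalComplex.cyclesMap_i φ j]
  rw [injective_iff_map_eq_zero, (homologyπ_surjective j).forall]
  simp only [h, homologyπ_apply_eq_zero_iff hi]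
  constructor
  · intro hinj x hx
    obtain ⟨z, rfl⟩ := exists_iCycles_eq hk hx
    exact hinj z
  · exact fun hx z ↦ hx _ (d_iCycles_apply z)

lemma homologyMap_surjective_iff {φ : M ⟶ N} {i j k : ι} (hi : c.prev j = i) (hk : c.next j = k) :
    Function.Surjective (HomologicalComplex.homologyMap φ j) ↔
      ∀ y : N.X j, N.d j k y = 0 →
        ∃ x, M.d j k x = 0 ∧ ∃ y', N.d i j y' = φ.f j x - y := by
  have h (z : M.cycles j) (w : N.cycles j) :
      HomologicalComplex.homologyMap φ j (M.homologyπ j z) = N.homologyπ j w ↔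
        ∃ y, N.d i j y = φ.f j (M.iCycles j z) - N.iCycles j w := by
    rw [elementwise_of% HomologicalComplex.homologyπ_naturality φ j, ← sub_eq_zero, ← map_sub,
      homologyπ_apply_eq_zero_iff hi, map_sub, elementwise_of% HomologicalComplex.cyclesMap_i φ j]
  simp only [Function.Surjective, (homologyπ_surjective j).forall, (homologyπ_surjective j).exists,
    h]
  constructor
  · intro hsurj y hy
    obtain ⟨w, rfl⟩ := exists_iCycles_eq hk hy
    obtain ⟨z, hz⟩ := hsurj w
    exact ⟨M.iCycles j z, d_iCycles_apply z, hz⟩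
  · intro hy w
    obtain ⟨x, hx, hxw⟩ := hy _ (d_iCycles_apply w)
    obtain ⟨z, rfl⟩ := exists_iCycles_eq hk hx
    exact ⟨z, hxw⟩

variable (φ : M ⟶ N)

/-- The differential `(x, y) ↦ (d x, φ x - d y)` of the mapping cone of `φ`, up to the sign and
index conventions of `CochainComplex.mappingCone`. It is a plain linear map, so that exactness can
be checked on elements. -/
def coneD (i j k : ι) : (M.X j × N.X i) →ₗ[R] (M.X k × N.X j) :=
  ((M.d j k).hom ∘ₗ .fst R _ _).prod ((φ.f j).hom ∘ₗ .fst R _ _ - (N.d i j).hom ∘ₗ .snd R _ _)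

lemma coneD_eq_iff {φ : M ⟶ N} {i j k : ι} {x : M.X j} {y : N.X i} {z : M.X k × N.X j} :
    coneD φ i j k (x, y) = z ↔ M.d j k x = z.1 ∧ φ.f j x - N.d i j y = z.2 :=
  Prod.ext_iff

lemma coneD_coneD (i j k l : ι) (z : M.X j × N.X i) : coneD φ j k l (coneD φ i j k z) = 0 := by
  obtain ⟨x, y⟩ := z
  refine coneD_eq_iff.2 ⟨d_d_apply x, ?_⟩
  change φ.f k (M.d j k x) - N.d j k (φ.f j x - N.d i j y) = 0
  rw [map_sub, d_d_apply, sub_zero, elementwise_of% φ.comm j k, sub_self]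

end Homology

section Cone

variable {M N : CochainComplex (ModuleCat.{v} R) ℤ}

/-- The mapping cone of `φ` is exact in all degrees. -/
def ConeAcyclic (φ : M ⟶ N) : Prop :=
  ∀ ⦃i j k l : ℤ⦄, i + 1 = j → j + 1 = k → k + 1 = l →
    Function.Exact (coneD φ i j k) (coneD φ j k l)

lemma up_prev {i j : ℤ} (hij : i + 1 = j) : (ComplexShape.up ℤ).prev j = i :=
  (ComplexShape.up ℤ).prev_eq' hij

lemma up_next {i j : ℤ} (hij : i + 1 = j) : (ComplexShape.up ℤ).next i = j :=
  (ComplexShape.up ℤ).next_eq' hij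

lemma ConeAcyclic.quasiIso {φ : M ⟶ N} (hφ : ConeAcyclic φ) : QuasiIso φ := by
  refine ⟨fun n ↦ ?_⟩
  rw [quasiIsoAt_iff_isIso_homologyMap, ConcreteCategory.isIso_iff_bijective]
  constructor
  · rw [homologyMap_injective_iff (up_prev (sub_add_cancel n 1)) (up_next rfl)]
    rintro x hx ⟨y, hy⟩
    have hxy : coneD φ (n - 1) n (n + 1) (x, y) = 0 := coneD_eq_iff.2 ⟨hx, sub_eq_zero.2 hy.symm⟩
    obtain ⟨⟨x', y'⟩, hxy'⟩ := (hφ (sub_add_cancel _ 1) (sub_add_cancel n 1) rfl _).1 hxy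
    exact ⟨x', (coneD_eq_iff.1 hxy').1⟩
  · rw [homologyMap_surjective_iff (up_prev (sub_add_cancel n 1)) (up_next rfl)]
    intro y hy
    have h0y : coneD φ n (n + 1) (n + 1 + 1) (0, y) = 0 := by
      rw [coneD_eq_iff, map_zero, map_zero, hy, sub_zero]
      exact ⟨rfl, rfl⟩
    obtain ⟨⟨x, y'⟩, hxy'⟩ := (hφ (sub_add_cancel n 1) rfl rfl _).1 h0y
    obtain ⟨hx, hφx⟩ := coneD_eq_iff.1 hxy'
    exact ⟨x, hx, y', eq_sub_of_add_eq (sub_eq_iff_eq_add'.1 hφx).symm⟩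

lemma coneAcyclic_of_quasiIso (φ : M ⟶ N) [QuasiIso φ] : ConeAcyclic φ := by
  intro i j k l hij hjk hkl
  have hbij (n : ℤ) : Function.Bijective (HomologicalComplex.homologyMap φ n) :=
    (ConcreteCategory.isIso_iff_bijective _).1 inferInstance
  refine .of_comp_of_mem_range (funext (coneD_coneD φ i j k l)) fun ⟨x, y⟩ hxy ↦ ?_
  obtain ⟨hx, hφx⟩ := coneD_eq_iff.1 hxy
  obtain ⟨x₁, hx₁⟩ := (homologyMap_injective_iff (up_prev hjk) (up_next hkl)).1 (hbij k).1 x hx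
    ⟨y, (sub_eq_zero.1 hφx).symm⟩
  have hw : N.d j k (φ.f j x₁ - y) = 0 := by
    rw [map_sub, elementwise_of% φ.comm j k]
    exact hx₁.symm ▸ hφx
  obtain ⟨x₂, hx₂, y', hy'⟩ :=
    (homologyMap_surjective_iff (up_prev hij) (up_next hjk)).1 (hbij j).2 _ hw
  refine ⟨(x₁ - x₂, -y'), coneD_eq_iff.2 ⟨?_, ?_⟩⟩
  · rw [map_sub, hx₂, sub_zero]
    exact hx₁
  · rw [map_neg, map_sub, hy']
    abel

end Cone

section Components

variable {C : Type*} [Category* C] [Preadditive C]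
  {K L : HomologicalComplex₂ C (.up ℤ) (.up ℤ)} [K.HasTotal (.up ℤ)] [L.HasTotal (.up ℤ)]

variable (K) in
/-- The inclusion of the component `K^{i,j}` into `Tot(K)^n`, with the indices implicit in `h`. -/
noncomputable abbrev totalι {i j n : ℤ} (h : i + j = n) : (K.X i).X j ⟶ (K.total (.up ℤ)).X n :=
  K.ιTotal (.up ℤ) i j n h

variable (K) in
/-- The projection of `Tot(K)^n` to its component `K^{i,j}`. The `XXIsoOfEq` in the definition is an
identity, which transports along the equality of the second indices. -/
noncomputable def totalπ {i j n : ℤ} (h : i + j = n) : (K.total (.up ℤ)).X n ⟶ (K.X i).X j :=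
  K.totalDesc fun i' j' (h' : i' + j' = n) ↦
    if hi : i' = i then (K.XXIsoOfEq _ _ _ hi (by omega : j' = j)).hom else 0

lemma totalι_totalπ {i j n : ℤ} (h : i + j = n) : totalι K h ≫ totalπ K h = 𝟙 _ := by
  simp [totalπ]

lemma totalι_totalπ_of_ne {i j i' j' n : ℤ} (h : i + j = n) (h' : i' + j' = n) (hi : i ≠ i') :
    totalι K h ≫ totalπ K h' = 0 := by
  simp [totalπ, hi]

lemma totalι_d {i i' j j' n n' : ℤ} (hi : i + 1 = i') (hj : j + 1 = j') (h : i + j = n)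
    (h₁ : i' + j = n') (h₂ : i + j' = n') :
    totalι K h ≫ (K.total (.up ℤ)).d n n' =
      (K.d i i').f j ≫ totalι K h₁ + i.negOnePow • (K.X i).d j j' ≫ totalι K h₂ := by
  rw [total_d, Preadditive.comp_add, K.ι_D₁, K.ι_D₂, K.d₁_eq (.up ℤ) hi j n' h₁,
    K.d₂_eq (.up ℤ) i hj n' h₂]
  simp

lemma d_totalπ {i₀ i j₀ j n₀ n : ℤ} (hi : i₀ + 1 = i) (hj : j₀ + 1 = j)
    (h₁ : i₀ + j = n₀) (h₂ : i + j₀ = n₀) (h : i + j = n) :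
    (K.total (.up ℤ)).d n₀ n ≫ totalπ K h =
      totalπ K h₁ ≫ (K.d i₀ i).f j + i.negOnePow • totalπ K h₂ ≫ (K.X i).d j₀ j := by
  refine total.hom_ext _ fun a b (hab : a + b = n₀) ↦ ?_
  change totalι K hab ≫ _ = totalι K hab ≫ _
  rw [← Category.assoc, totalι_d rfl rfl hab (by omega) (by omega)]
  obtain rfl | ha := eq_or_ne a i
  · obtain rfl : b = j₀ := by omega
    subst hj
    have : a ≠ i₀ := by omega
    simp [totalι_totalπ, totalι_totalπ_of_ne, reassoc_of% totalι_totalπ,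
      reassoc_of% totalι_totalπ_of_ne hab h₁, this]
  obtain rfl | ha₀ := eq_or_ne a i₀
  · obtain rfl : b = j := by omega
    subst hi
    simp [totalι_totalπ, totalι_totalπ_of_ne, reassoc_of% totalι_totalπ,
      reassoc_of% totalι_totalπ_of_ne hab h₂]
  · have : a + 1 ≠ i := by omega
    simp [totalι_totalπ_of_ne, reassoc_of% totalι_totalπ_of_ne hab h₁ ha₀,
      reassoc_of% totalι_totalπ_of_ne hab h₂ ha, this, ha]

lemma map_totalπ (f : K ⟶ L) {i j n : ℤ} (h : i + j = n) :
    (total.map f (.up ℤ)).f n ≫ totalπ L h = totalπ K h ≫ (f.f i).f j := by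
  refine total.hom_ext _ fun a b (hab : a + b = n) ↦ ?_
  rw [ιTotal_map_assoc]
  obtain rfl | ha := eq_or_ne a i
  · obtain rfl : b = j := by omega
    simp [totalπ]
  · simp [totalπ, ha]

end Components

section Filtration

variable {K L : HomologicalComplex₂ (ModuleCat.{v} R) (.up ℤ) (.up ℤ)}

lemma totalπ_totalι_apply {i j n : ℤ} (h : i + j = n) (a : (K.X i).X j) :
    totalπ K h (totalι K h a) = a :=
  (elementwise_of% (totalι_totalπ (K := K) h)) a

lemma totalπ_totalι_apply_of_ne {i j i' j' n : ℤ} (h : i + j = n) (h' : i' + j' = n)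
    (hi : i ≠ i') (a : (K.X i).X j) : totalπ K h' (totalι K h a) = 0 :=
  (elementwise_of% (totalι_totalπ_of_ne (K := K) h h' hi)) a

lemma totalπ_d_apply {i₀ i j₀ j n₀ n : ℤ} (hi : i₀ + 1 = i) (hj : j₀ + 1 = j)
    (h₁ : i₀ + j = n₀) (h₂ : i + j₀ = n₀) (h : i + j = n) (x : (K.total (.up ℤ)).X n₀) :
    totalπ K h ((K.total (.up ℤ)).d n₀ n x) =
      (K.d i₀ i).f j (totalπ K h₁ x) + i.negOnePow • (K.X i).d j₀ j (totalπ K h₂ x) :=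
  congrArg (fun g ↦ g.hom x) (d_totalπ (K := K) hi hj h₁ h₂ h)

lemma map_totalι_apply (f : K ⟶ L) {i j n : ℤ} (h : i + j = n) (a : (K.X i).X j) :
    (total.map f (.up ℤ)).f n (totalι K h a) = totalι L h ((f.f i).f j a) :=
  congrArg (fun g ↦ g.hom a) (ιTotal_map _ _ f (.up ℤ) i j n h)

lemma totalπ_map_apply (f : K ⟶ L) {i j n : ℤ} (h : i + j = n) (x : (K.total (.up ℤ)).X n) :
    totalπ L h ((total.map f (.up ℤ)).f n x) = (f.f i).f j (totalπ K h x) :=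
  congrArg (fun g ↦ g.hom x) (map_totalπ f h)

lemma iSup_range_totalι (n : ℤ) :
    ⨆ i, LinearMap.range (totalι K (add_sub_cancel i n)).hom = ⊤ := by
  set S := ⨆ i, LinearMap.range (totalι K (add_sub_cancel i n)).hom
  have hS : ModuleCat.ofHom S.mkQ = 0 := by
    refine total.hom_ext _ fun i j (h : i + j = n) ↦ ?_
    obtain rfl : j = n - i := by omega
    ext a
    exact (Submodule.Quotient.mk_eq_zero S).2 (Submodule.mem_iSup_of_mem i ⟨a, rfl⟩)
  rw [← S.ker_mkQ, LinearMap.ker_eq_top]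
  exact congrArg ModuleCat.Hom.hom hS

lemma eventually_sum_totalι_totalπ {n : ℤ} (x : (K.total (.up ℤ)).X n) :
    ∀ᶠ S : Finset ℤ in .atTop,
      ∑ i ∈ S, totalι K (add_sub_cancel i n) (totalπ K (add_sub_cancel i n) x) = x := by
  have hx : x ∈ ⨆ i, LinearMap.range (totalι K (add_sub_cancel i n)).hom :=
    iSup_range_totalι (K := K) n ▸ Submodule.mem_top
  induction hx using Submodule.iSup_induction' with
  | zero => simp
  | mem i x hx =>
    obtain ⟨a, rfl⟩ := hx
    filter_upwards [Filter.eventually_ge_atTop {i}] with S hS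
    rw [Finset.sum_eq_single_of_mem i (hS (Finset.mem_singleton_self i))]
    · exact congrArg _ (totalπ_totalι_apply _ a)
    · intro i' _ hi'
      exact (congrArg _ (totalπ_totalι_apply_of_ne _ _ hi'.symm a)).trans (map_zero _)
  | add x y _ _ hx hy =>
    filter_upwards [hx, hy] with S hxS hyS
    simp only [map_add, Finset.sum_add_distrib, hxS, hyS]

lemma eq_zero_of_totalπ_eq_zero {n : ℤ} {x : (K.total (.up ℤ)).X n}
    (hx : ∀ ⦃i j⦄ (h : i + j = n), totalπ K h x = 0) : x = 0 := by
  obtain ⟨S, hS⟩ := (eventually_sum_totalι_totalπ x).exists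
  rw [← hS]
  exact Finset.sum_eq_zero fun i _ ↦ by rw [hx, map_zero]

variable (K) in
/-- The decreasing filtration of `Tot(K)^n` by columns: the step `p` consists of the elements whose
components vanish in all columns `i < p`. -/
noncomputable def columnFiltration (n p : ℤ) : Submodule R ((K.total (.up ℤ)).X n) :=
  ⨅ (i : ℤ) (j : ℤ) (h : i + j = n) (_ : i < p), LinearMap.ker (totalπ K h).hom

lemma mem_columnFiltration {n p : ℤ} {x : (K.total (.up ℤ)).X n} :
    x ∈ columnFiltration K n p ↔ ∀ ⦃i j⦄ (h : i + j = n), i < p → totalπ K h x = 0 := by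
  simp [columnFiltration, Submodule.mem_iInf]

lemma mem_columnFiltration_succ {n p q : ℤ} (h : p + q = n) {x : (K.total (.up ℤ)).X n} :
    x ∈ columnFiltration K n (p + 1) ↔ x ∈ columnFiltration K n p ∧ totalπ K h x = 0 := by
  simp only [mem_columnFiltration]
  refine ⟨fun hx ↦ ⟨fun i j hij hi ↦ hx hij (by omega), hx h (by omega)⟩, fun hx i j hij hi ↦ ?_⟩
  obtain hi | rfl : i < p ∨ i = p := by omega
  · exact hx.1 hij hi
  · obtain rfl : j = q := by omega
    exact hx.2

lemma totalι_mem_columnFiltration {i j n p : ℤ} (h : i + j = n) (hi : p ≤ i) (a : (K.X i).X j) :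
    totalι K h a ∈ columnFiltration K n p :=
  mem_columnFiltration.2 fun _ _ h' hi' ↦
    totalπ_totalι_apply_of_ne h h' (by omega) a

lemma exists_mem_columnFiltration {n : ℤ} (x : (K.total (.up ℤ)).X n) :
    ∃ p₀, ∀ p ≤ p₀, x ∈ columnFiltration K n p := by
  obtain ⟨S, hS⟩ := (eventually_sum_totalι_totalπ x).exists
  obtain ⟨p₀, hp₀⟩ := S.bddBelow
  refine ⟨p₀, fun p hp ↦ ?_⟩
  rw [← hS]
  exact sum_mem fun i hi ↦ totalι_mem_columnFiltration _ (hp.trans (hp₀ hi)) _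

lemma d_mem_columnFiltration {n₀ n p : ℤ} (hn : n₀ + 1 = n) {x : (K.total (.up ℤ)).X n₀}
    (hx : x ∈ columnFiltration K n₀ p) : (K.total (.up ℤ)).d n₀ n x ∈ columnFiltration K n p := by
  rw [mem_columnFiltration] at hx ⊢
  intro i j h hi
  rw [totalπ_d_apply (sub_add_cancel i 1) (sub_add_cancel j 1) (by omega) (by omega) h,
    hx _ (by omega), hx _ hi, map_zero, map_zero, smul_zero, add_zero]

lemma totalπ_d_of_mem_columnFiltration {n₀ n p j₀ j : ℤ} (hj : j₀ + 1 = j) (h₀ : p + j₀ = n₀)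
    (h : p + j = n) {x : (K.total (.up ℤ)).X n₀} (hx : x ∈ columnFiltration K n₀ p) :
    totalπ K h ((K.total (.up ℤ)).d n₀ n x) = p.negOnePow • (K.X p).d j₀ j (totalπ K h₀ x) := by
  rw [totalπ_d_apply (sub_add_cancel p 1) hj (by omega) h₀ h,
    mem_columnFiltration.1 hx _ (sub_one_lt p), map_zero, zero_add]

lemma map_mem_columnFiltration (f : K ⟶ L) {n p : ℤ} {x : (K.total (.up ℤ)).X n}
    (hx : x ∈ columnFiltration K n p) :
    (total.map f (.up ℤ)).f n x ∈ columnFiltration L n p := by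
  refine mem_columnFiltration.2 fun i j h hi ↦ ?_
  rw [totalπ_map_apply, mem_columnFiltration.1 hx h hi, map_zero]

lemma map_injOn_columnFiltration (f : K ⟶ L) {n p : ℤ}
    (hf : ∀ i, p ≤ i → IsIso ((f.f i).f (n - i))) :
    Set.InjOn ((total.map f (.up ℤ)).f n) (columnFiltration K n p) := by
  intro x hx y hy hxy
  refine sub_eq_zero.1 (eq_zero_of_totalπ_eq_zero fun i j h ↦ ?_)
  obtain hi | hi := lt_or_ge i p
  · exact mem_columnFiltration.1 (sub_mem hx hy) h hi
  · obtain rfl : j = n - i := by omega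
    have hinj : Function.Injective ((f.f i).f (n - i)) :=
      ((ConcreteCategory.isIso_iff_bijective _).1 (hf i hi)).1
    refine hinj ?_
    rw [← totalπ_map_apply, map_sub, hxy, sub_self, map_zero, map_zero]

lemma map_surjOn_columnFiltration (f : K ⟶ L) {n p : ℤ}
    (hf : ∀ i, p ≤ i → IsIso ((f.f i).f (n - i))) :
    Set.SurjOn ((total.map f (.up ℤ)).f n) (columnFiltration K n p) (columnFiltration L n p) := by
  intro y hy
  change y ∈ (columnFiltration K n p).map ((total.map f (.up ℤ)).f n).hom
  obtain ⟨S, hS⟩ := (eventually_sum_totalι_totalπ y).exists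
  rw [← hS]
  refine sum_mem fun i _ ↦ ?_
  obtain hi | hi := lt_or_ge i p
  · rw [mem_columnFiltration.1 hy _ hi, map_zero]
    exact zero_mem _
  · have hsurj : Function.Surjective ((f.f i).f (n - i)) :=
      ((ConcreteCategory.isIso_iff_bijective _).1 (hf i hi)).2
    obtain ⟨a, ha⟩ := hsurj (totalπ L (add_sub_cancel i n) y)
    refine ⟨totalι K (add_sub_cancel i n) a, totalι_mem_columnFiltration _ hi a, ?_⟩
    rw [← ha]
    exact map_totalι_apply f (add_sub_cancel i n) a

end Filtration

section Descent

lemma exact_of_filtration {A B C : Type*} [AddCommGroup A] [AddCommGroup B] [AddCommGroup C]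
    [Module R A] [Module R B] [Module R C] {D : A →ₗ[R] B} {D' : B →ₗ[R] C}
    (hD : ∀ w, D' (D w) = 0) (F : ℤ → Submodule R B) (t : ℤ) (hF : ∀ z, ∃ p ≤ t, z ∈ F p)
    (hstep : ∀ p, ∀ z ∈ F p, D' z = 0 → ∃ w, z - D w ∈ F (p + 1))
    (hbase : ∀ z ∈ F t, D' z = 0 → z ∈ Set.range D) : Function.Exact D D' := by
  have descent {p : ℤ} (hp : p ≤ t) : ∀ z ∈ F p, D' z = 0 → z ∈ Set.range D := by
    induction p, hp using Int.leInductionDown with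
    | base => exact hbase
    | pred p _ ih =>
      intro z hz hDz
      obtain ⟨w, hw⟩ := hstep _ z hz hDz
      rw [sub_add_cancel] at hw
      obtain ⟨w', hw'⟩ := ih _ hw (by rw [map_sub, hDz, hD, sub_zero])
      exact ⟨w' + w, by rw [map_add, hw', sub_add_cancel]⟩
  refine .of_comp_of_mem_range (funext hD) fun z hz ↦ ?_
  obtain ⟨p, hp, hzp⟩ := hF z
  exact descent hp z hzp hz

variable {K L : HomologicalComplex₂ (ModuleCat.{v} R) (.up ℤ) (.up ℤ)}

-- The sign in the second entry absorbs the `(-1)^p` with which `Tot` twists the `p`-th column.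
lemma coneD_totalπ_eq_zero (f : K ⟶ L) {p q₁ q₂ q₃ n₁ n₂ n₃ : ℤ} (hq₂ : q₁ + 1 = q₂)
    (hq₃ : q₂ + 1 = q₃) (h₁ : p + q₁ = n₁) (h₂ : p + q₂ = n₂) (h₃ : p + q₃ = n₃)
    {x : (K.total (.up ℤ)).X n₂} {y : (L.total (.up ℤ)).X n₁} (hx : x ∈ columnFiltration K n₂ p)
    (hy : y ∈ columnFiltration L n₁ p) (hxy : coneD (total.map f (.up ℤ)) n₁ n₂ n₃ (x, y) = 0) :
    coneD (f.f p) q₁ q₂ q₃ (totalπ K h₂ x, p.negOnePow • totalπ L h₁ y) = 0 := by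
  obtain ⟨hdx, hφx⟩ := coneD_eq_iff.1 hxy
  refine coneD_eq_iff.2 ⟨?_, ?_⟩
  · have hπdx := totalπ_d_of_mem_columnFiltration hq₃ h₂ h₃ hx
    rw [hdx] at hπdx
    exact (smul_eq_zero_iff_eq _).1 (hπdx.symm.trans (map_zero _))
  · rw [map_zsmul_unit, ← totalπ_d_of_mem_columnFiltration hq₂ h₁ h₂ hy, ← totalπ_map_apply,
      ← map_sub, hφx]
    exact map_zero _

lemma exists_sub_coneD_mem_columnFiltration (f : K ⟶ L) {p n₀ n₁ n₂ n₃ : ℤ} (h₁ : n₀ + 1 = n₁)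
    (h₂ : n₁ + 1 = n₂) (h₃ : n₂ + 1 = n₃) (hp : ConeAcyclic (f.f p))
    {z : (K.total (.up ℤ)).X n₂ × (L.total (.up ℤ)).X n₁}
    (hz : z ∈ (columnFiltration K n₂ p).prod (columnFiltration L n₁ p))
    (hDz : coneD (total.map f (.up ℤ)) n₁ n₂ n₃ z = 0) :
    ∃ w, z - coneD (total.map f (.up ℤ)) n₀ n₁ n₂ w ∈
      (columnFiltration K n₂ (p + 1)).prod (columnFiltration L n₁ (p + 1)) := by
  obtain ⟨x, y⟩ := z
  obtain ⟨hx, hy⟩ := hz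
  have e (n : ℤ) : p + (n - p) = n := add_sub_cancel p n
  obtain ⟨⟨a, b⟩, hab⟩ :=
    (hp (by omega : n₀ - p + 1 = n₁ - p) (by omega : n₁ - p + 1 = n₂ - p)
      (by omega : n₂ - p + 1 = n₃ - p) _).1
      (coneD_totalπ_eq_zero f (by omega) (by omega) (e n₁) (e n₂) (e n₃) hx hy hDz)
  obtain ⟨ha, hb⟩ := coneD_eq_iff.1 hab
  set x' := totalι K (e n₁) (p.negOnePow • a)
  set y' := totalι L (e n₀) b
  have hx' : x' ∈ columnFiltration K n₁ p := totalι_mem_columnFiltration _ le_rfl _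
  have hy' : y' ∈ columnFiltration L n₀ p := totalι_mem_columnFiltration _ le_rfl _
  refine ⟨(x', y'), (mem_columnFiltration_succ (e n₂)).2 ⟨?_, ?_⟩,
    (mem_columnFiltration_succ (e n₁)).2 ⟨?_, ?_⟩⟩
  · exact sub_mem hx (d_mem_columnFiltration h₂ hx')
  · change totalπ K (e n₂) (x - (K.total (.up ℤ)).d n₁ n₂ x') = 0
    rw [map_sub, totalπ_d_of_mem_columnFiltration (by omega) (e n₁) (e n₂) hx',
      totalπ_totalι_apply, map_zsmul_unit, smul_smul, Int.units_mul_self, one_smul, ha, sub_self]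
  · exact sub_mem hy (sub_mem (map_mem_columnFiltration f hx') (d_mem_columnFiltration h₁ hy'))
  · change totalπ L (e n₁) (y - ((total.map f (.up ℤ)).f n₁ x' - (L.total (.up ℤ)).d n₀ n₁ y')) = 0
    rw [map_sub, map_sub, totalπ_map_apply, totalπ_totalι_apply, map_zsmul_unit,
      totalπ_d_of_mem_columnFiltration (by omega) (e n₀) (e n₁) hy', totalπ_totalι_apply,
      ← smul_sub, hb, smul_smul, Int.units_mul_self, one_smul, sub_self]

lemma mem_range_coneD_of_isIso (f : K ⟶ L) {t n₀ n₁ n₂ n₃ : ℤ} (h₂ : n₁ + 1 = n₂)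
    (hf₁ : ∀ i, t ≤ i → IsIso ((f.f i).f (n₁ - i)))
    (hf₂ : ∀ i, t ≤ i → IsIso ((f.f i).f (n₂ - i)))
    {z : (K.total (.up ℤ)).X n₂ × (L.total (.up ℤ)).X n₁}
    (hz : z ∈ (columnFiltration K n₂ t).prod (columnFiltration L n₁ t))
    (hDz : coneD (total.map f (.up ℤ)) n₁ n₂ n₃ z = 0) :
    z ∈ Set.range (coneD (total.map f (.up ℤ)) n₀ n₁ n₂) := by
  obtain ⟨x, y⟩ := z
  obtain ⟨hx, hy⟩ := hz
  obtain ⟨-, hφx⟩ := coneD_eq_iff.1 hDz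
  obtain ⟨x', hx', rfl⟩ := map_surjOn_columnFiltration f hf₁ hy
  refine ⟨(x', 0), coneD_eq_iff.2 ⟨?_, by rw [map_zero, sub_zero]⟩⟩
  refine map_injOn_columnFiltration f hf₂ (d_mem_columnFiltration h₂ hx') hx ?_
  rw [← elementwise_of% (total.map f (.up ℤ)).comm n₁ n₂]
  exact (sub_eq_zero.1 hφx).symm

end Descent

end DoubleComplex

open DoubleComplex in
theorem total_map_quasiIso_of_columns_quasiIso_general {R : Type u} [Ring R]
    {K L : HomologicalComplex₂ (ModuleCat.{v} R) (ComplexShape.up ℤ) (ComplexShape.up ℤ)}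
    (f : K ⟶ L) (hcols : ∀ i : ℤ, QuasiIso (f.f i))
    (hf : ∀ n : ℤ, ∃ t : ℤ, ∀ i : ℤ, t < i → IsIso ((f.f i).f (n - i))) :
    QuasiIso (HomologicalComplex₂.total.map f (ComplexShape.up ℤ)) := by
  refine ConeAcyclic.quasiIso fun n₀ n₁ n₂ n₃ h₁ h₂ h₃ ↦ ?_
  obtain ⟨t₁, ht₁⟩ := hf n₁
  obtain ⟨t₂, ht₂⟩ := hf n₂
  let t := max t₁ t₂ + 1
  refine exact_of_filtration (coneD_coneD _ n₀ n₁ n₂ n₃)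
    (fun p ↦ (columnFiltration K n₂ p).prod (columnFiltration L n₁ p)) t ?_ ?_ ?_
  · rintro ⟨x, y⟩
    obtain ⟨p, hp⟩ := exists_mem_columnFiltration x
    obtain ⟨q, hq⟩ := exists_mem_columnFiltration y
    exact ⟨min t (min p q), min_le_left _ _, hp _ (by omega), hq _ (by omega)⟩
  · intro p z
    exact exists_sub_coneD_mem_columnFiltration f h₁ h₂ h₃ (coneAcyclic_of_quasiIso (f.f p))
  · intro z
    exact mem_range_coneD_of_isIso f h₂ (fun i hi ↦ ht₁ i (by omega)) (fun i hi ↦ ht₂ i (by omega))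

/-- **Lemma 4.4.** Let `f : K → L` be a morphism of double complexes of `R`-modules such that
every column morphism `f^{i,•} : K^{i,•} → L^{i,•}` is a quasi-isomorphism.  If `K` and `L`
are diagonally bounded-above, then the total morphism `Tot(f) : Tot(K) → Tot(L)` is a
quasi-isomorphism. -/
theorem total_map_quasiIso_of_columns_quasiIso
    (R : Type) [Ring R]
    {K L : HomologicalComplex₂ (ModuleCat R) (ComplexShape.up ℤ) (ComplexShape.up ℤ)}
    (f : K ⟶ L)
    (hcols : ∀ i : ℤ, QuasiIso (f.f i))
    (hK : ∀ n : ℤ, ∃ t : ℤ, ∀ i : ℤ, t < i → IsZero ((K.X i).X (n - i)))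
    (hL : ∀ n : ℤ, ∃ t : ℤ, ∀ i : ℤ, t < i → IsZero ((L.X i).X (n - i))) :
    QuasiIso (HomologicalComplex₂.total.map f (ComplexShape.up ℤ)) := by
  refine total_map_quasiIso_of_columns_quasiIso_general f hcols fun n ↦ ?_
  obtain ⟨s, hs⟩ := hK n
  obtain ⟨t, ht⟩ := hL n
  exact ⟨max s t, fun i hi ↦ (hs i (by omega)).isIso (ht i (by omega)) _⟩
end
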